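/- arXiv:0711.0252 — 3 statements merged into one kernel-verified Lean document; each statement's English description precedes it below -/
import Mathlib

section
/- For all positive integers k1, …, kn with k1 ≥ 2, one has Σ_{i=1}^{n} (k_i − 1 + δ_{ni}) ζ̄(k1, …, k_{i−1}, k_i + 1, k_{i+1}, …, kn) = Σ_{1 ≤ i ≤ n, k_i ≥ 2} Σ_{j=0}^{k_i − 2} ζ̄(k1, …, k_{i−1}, k_i − j, j + 1, k_{i+1}, …, kn), where δ_{ni} = 1 if i = n and 0 otherwise. -/
open scoped BigOperators

/-- The non-strict multiple zeta value ζ̄(k₁,…,kₙ): the sum over all weakly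
decreasing tuples m₁ ≥ m₂ ≥ ⋯ ≥ mₙ > 0 of 1/(m₁^{k₁}⋯mₙ^{kₙ}). -/
noncomputable def nmzeta (ks : List ℕ) : ℝ :=
  ∑' m : {f : Fin ks.length → ℕ // (∀ i, 0 < f i) ∧
      ∀ i j : Fin ks.length, i ≤ j → f j ≤ f i},
    ∏ i : Fin ks.length, ((m.1 i : ℝ) ^ ks.get i)⁻¹

/-!
Truncate to tuples with `m₁ ≤ M`, writing `ζ̄_M(k)` for the finite sum. Induction on the depth shows
that the truncated relation for a nonempty index `k` (right side minus left side) has defect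
exactly `∑_{b < M} ζ̄_b(k) / (M - b) - H_M ζ̄_M(k)`, where `H_M` is the harmonic number; the
induction step is the partial fraction expansion of `1 / (yⁿ (x - y))`. Abel summation turns the
defect into `∑_{m ≤ M} g(m) (H_{M - m} - H_M)`, where `g(m) = ζ̄_m(k₂, …, kₙ) / m^{k₁}`. Each
summand tends to `0` as `M → ∞` and is bounded by `g(m) H_m`, which is summable when `k₁ ≥ 2`,
because `ζ̄_m(k₂, …, kₙ)` and `H_m` grow at most like powers of `log m`. So the defect tends to `0`
by dominated convergence.
-/

open Filter Finset Topology

namespace NonstrictMZV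

lemma harmonic_monotone : Monotone harmonic :=
  monotone_nat_of_le_succ fun n => by
    rw [harmonic_succ]
    exact le_add_of_nonneg_right (by positivity)

lemma harmonic_nonneg (n : ℕ) : 0 ≤ harmonic n :=
  sum_nonneg fun _ _ => by positivity

lemma one_le_harmonic {n : ℕ} (hn : 1 ≤ n) : 1 ≤ harmonic n := by
  simpa [harmonic] using harmonic_monotone hn

lemma harmonic_add_le (m n : ℕ) : harmonic (m + n) ≤ harmonic m + harmonic n := by
  induction n with
  | zero => simp
  | succ n ih =>
    have hinv : ((m + n + 1 : ℕ) : ℚ)⁻¹ ≤ ((n + 1 : ℕ) : ℚ)⁻¹ := by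
      gcongr
      omega
    rw [← add_assoc, harmonic_succ, harmonic_succ]
    linarith

lemma tendsto_harmonic_add_sub_harmonic (m : ℕ) :
    Tendsto (fun n => (harmonic (n + m) : ℝ) - harmonic n) atTop (𝓝 0) := by
  induction m with
  | zero => simp
  | succ m ih =>
    have hinv : Tendsto (fun n : ℕ => ((n + m + 1 : ℕ) : ℝ)⁻¹) atTop (𝓝 0) :=
      tendsto_inv_atTop_nhds_zero_nat.comp (tendsto_add_atTop_nat (m + 1))
    refine (zero_add (0 : ℝ) ▸ ih.add hinv).congr fun n => ?_
    rw [← add_assoc, harmonic_succ]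
    push_cast
    ring

lemma sum_Ico_inv_sub_eq_harmonic (m n : ℕ) :
    ∑ b ∈ Ico m n, ((n : ℝ) - b)⁻¹ = harmonic (n - m) := by
  rw [sum_Ico_eq_sum_range, ← sum_range_reflect, harmonic]
  push_cast
  refine sum_congr rfl fun i hi => ?_
  have hi : i < n - m := mem_range.1 hi
  rw [show n - m - 1 - i = n - (m + 1 + i) by omega, Nat.cast_sub (by omega)]
  push_cast
  ring_nf

open Asymptotics in
lemma isLittleO_harmonic_pow_rpow (d : ℕ) {s : ℝ} (hs : 0 < s) :
    (fun n : ℕ => (harmonic n : ℝ) ^ d) =o[atTop] fun n : ℕ => (n : ℝ) ^ s := by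
  have hlog : Tendsto (fun n : ℕ => Real.log n) atTop atTop :=
    Real.tendsto_log_atTop.comp tendsto_natCast_atTop_atTop
  have hsub : (fun n : ℕ => (harmonic n : ℝ) - Real.log n) =O[atTop] fun n : ℕ => Real.log n :=
    (Real.tendsto_harmonic_sub_log.isBigO_one ℝ).trans
      ((isLittleO_const_left.2 (Or.inr (tendsto_norm_atTop_atTop.comp hlog))).isBigO)
  have hharmonic : (fun n : ℕ => (harmonic n : ℝ)) =O[atTop] fun n : ℕ => Real.log n := by
    simpa using hsub.add (isBigO_refl (fun n : ℕ => Real.log n) atTop)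
  have hpow := (isLittleO_log_rpow_rpow_atTop (d : ℝ) hs).comp_tendsto
    tendsto_natCast_atTop_atTop
  simp only [Real.rpow_natCast] at hpow
  exact (hharmonic.pow d).trans_isLittleO hpow

/-- The convolution of the sequence `s` with `n ↦ 1 / n` at `M`, recentred by `H_M s(M)`, where
`H_M` is the harmonic number. For `s = nmzetaTrunc k` it is the error in the Hoffman relation of
the truncated sums. -/
noncomputable def centeredConv (s : ℕ → ℝ) (M : ℕ) : ℝ :=
  ∑ b ∈ Ico 1 M, s b * ((M : ℝ) - b)⁻¹ - harmonic M * s M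

lemma centeredConv_one (M : ℕ) : centeredConv (fun _ => 1) M = -(M : ℝ)⁻¹ := by
  cases M with
  | zero => simp [centeredConv]
  | succ M =>
    simp only [centeredConv, one_mul, mul_one, sum_Ico_inv_sub_eq_harmonic, harmonic_succ,
      add_tsub_cancel_right]
    push_cast
    ring

lemma centeredConv_sum_Icc (g : ℕ → ℝ) (M : ℕ) :
    centeredConv (fun n => ∑ m ∈ Icc 1 n, g m) M =
      ∑ m ∈ Icc 1 M, g m * (harmonic (M - m) - harmonic M) := by
  have hswap : ∑ b ∈ Ico 1 M, (∑ m ∈ Icc 1 b, g m) * ((M : ℝ) - b)⁻¹ =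
      ∑ m ∈ Ico 1 M, g m * harmonic (M - m) := by
    simp only [← sum_Ico_inv_sub_eq_harmonic, sum_mul, mul_sum, ← Ico_add_one_right_eq_Icc]
    exact (sum_Ico_Ico_comm _ _ _).symm
  have hlast : ∑ m ∈ Ico 1 M, g m * (harmonic (M - m) : ℝ) =
      ∑ m ∈ Icc 1 M, g m * (harmonic (M - m) : ℝ) := by
    refine sum_subset Ico_subset_Icc_self fun m hm hm' => ?_
    obtain rfl : m = M := by grind
    simp
  simp only [centeredConv, hswap, hlast, mul_sub, sum_sub_distrib, ← sum_mul]
  ring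

lemma centeredConv_sum_Icc_succ (g : ℕ → ℝ) (M : ℕ) :
    centeredConv (fun n => ∑ m ∈ Icc 1 n, g m) (M + 1) =
      centeredConv (fun n => ∑ m ∈ Icc 1 n, g m) M +
        (∑ m ∈ Ico 1 (M + 1), g m * (((M + 1 : ℕ) - m : ℝ)⁻¹ - ((M + 1 : ℕ) : ℝ)⁻¹) -
          harmonic (M + 1) * g (M + 1)) := by
  have hterm : ∀ m ∈ Icc 1 M, g m * ((harmonic (M + 1 - m) : ℝ) - harmonic (M + 1)) =
      g m * ((harmonic (M - m) : ℝ) - harmonic M) +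
        g m * (((M + 1 : ℕ) - m : ℝ)⁻¹ - ((M + 1 : ℕ) : ℝ)⁻¹) := by
    intro m hm
    have hmM : m ≤ M := (mem_Icc.1 hm).2
    rw [Nat.sub_add_comm hmM, harmonic_succ, harmonic_succ, ← Nat.sub_add_comm hmM]
    push_cast [Nat.cast_sub (hmM.trans M.le_succ)]
    ring
  simp only [centeredConv_sum_Icc, sum_Icc_succ_top M.succ_pos, Ico_add_one_right_eq_Icc]
  rw [sum_congr rfl hterm, sum_add_distrib, Nat.sub_self, harmonic_zero]
  push_cast
  ring

lemma sum_inv_pow_mul_inv_pow_add {K : Type*} [Field K] {x y : K} (hx : x ≠ 0) (hy : y ≠ 0)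
    (hxy : x - y ≠ 0) (n : ℕ) :
    ∑ j ∈ range n, (x ^ (n + 1 - j))⁻¹ * (y ^ (j + 1))⁻¹ + (x ^ (n + 1))⁻¹ * (x - y)⁻¹ =
      (y ^ (n + 1))⁻¹ * ((x - y)⁻¹ - x⁻¹) := by
  induction n with
  | zero =>
    simp only [range_zero, sum_empty]
    field_simp
    ring
  | succ n ih =>
    have hshift : ∑ j ∈ range n, (x ^ (n + 1 + 1 - j))⁻¹ * (y ^ (j + 1))⁻¹ =
        x⁻¹ * ∑ j ∈ range n, (x ^ (n + 1 - j))⁻¹ * (y ^ (j + 1))⁻¹ := by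
      rw [mul_sum]
      refine sum_congr rfl fun j hj => ?_
      rw [Nat.sub_add_comm (by grind), pow_succ, mul_inv]
      ring
    rw [sum_range_succ, hshift, eq_sub_of_add_eq ih, show n + 1 + 1 - n = 2 by omega]
    field_simp
    ring

lemma centeredConv_sum_inv_pow_mul (s : ℕ → ℝ) {a : ℕ} (ha : 1 ≤ a) (M : ℕ) :
    centeredConv (fun n => ∑ m ∈ Icc 1 n, ((m : ℝ) ^ a)⁻¹ * s m) M =
      ∑ x ∈ Icc 1 M, (∑ b ∈ Ico 1 x,
        (∑ j ∈ range (a - 1), ((x : ℝ) ^ (a - j))⁻¹ * ((b : ℝ) ^ (j + 1))⁻¹) * s b +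
          ((x : ℝ) ^ a)⁻¹ * centeredConv s x) := by
  induction M with
  | zero => simp [centeredConv]
  | succ M ih =>
    have hpartialFraction : ∀ b ∈ Ico 1 (M + 1),
        ((b : ℝ) ^ a)⁻¹ * s b * (((M + 1 : ℕ) - b : ℝ)⁻¹ - ((M + 1 : ℕ) : ℝ)⁻¹) =
          (∑ j ∈ range (a - 1), (((M + 1 : ℕ) : ℝ) ^ (a - j))⁻¹ * ((b : ℝ) ^ (j + 1))⁻¹) * s b +
            (((M + 1 : ℕ) : ℝ) ^ a)⁻¹ * (s b * ((M + 1 : ℕ) - b : ℝ)⁻¹) := by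
      intro b hb
      obtain ⟨n, rfl⟩ := Nat.exists_eq_add_of_le' ha
      obtain ⟨hb1, hbM⟩ := mem_Ico.1 hb
      have hsub : ((M + 1 : ℕ) : ℝ) - b ≠ 0 := sub_ne_zero.2 (by exact_mod_cast hbM.ne')
      rw [add_tsub_cancel_right, mul_right_comm,
        ← sum_inv_pow_mul_inv_pow_add (by positivity) (by positivity) hsub]
      ring
    rw [centeredConv_sum_Icc_succ, ih, sum_Icc_succ_top (Nat.le_add_left 1 M),
      sum_congr rfl hpartialFraction, sum_add_distrib (s := Ico 1 (M + 1)), ← mul_sum,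
      centeredConv.eq_def s (M + 1)]
    ring

lemma abs_harmonic_sub_sub_harmonic_le {m M : ℕ} (hm : m ≤ M) :
    |(harmonic (M - m) : ℝ) - harmonic M| ≤ harmonic m := by
  have hmono := harmonic_monotone (M.sub_le m)
  have hsubadd := harmonic_add_le (M - m) m
  rw [Nat.sub_add_cancel hm] at hsubadd
  rw [abs_sub_comm, abs_of_nonneg (sub_nonneg.2 (by exact_mod_cast hmono)), sub_le_iff_le_add']
  exact_mod_cast hsubadd

theorem tendsto_centeredConv_sum_Icc {g : ℕ → ℝ} (hg : Summable fun m => g m * harmonic m) :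
    Tendsto (centeredConv fun n => ∑ m ∈ Icc 1 n, g m) atTop (𝓝 0) := by
  have hlim := tendsto_tsum_of_dominated_convergence (𝓕 := atTop)
    (f := fun M => (Icc 1 M : Set ℕ).indicator
      fun m => g m * ((harmonic (M - m) : ℝ) - harmonic M))
    (g := fun _ => (0 : ℝ)) hg.norm (fun m => ?pointwise) (.of_forall fun M m => ?dominated)
  · rw [tsum_zero] at hlim
    refine hlim.congr fun M => ?_
    rw [centeredConv_sum_Icc, sum_eq_tsum_indicator]
  case pointwise =>
    refine squeeze_zero_norm (fun M => norm_indicator_le_norm_self _ _) ?_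
    rw [← tendsto_add_atTop_iff_nat m]
    simpa using ((tendsto_harmonic_add_sub_harmonic m).neg.const_mul (g m)).norm
  case dominated =>
    by_cases hm : m ∈ (Icc 1 M : Set ℕ)
    · rw [Set.indicator_of_mem hm, norm_mul, norm_mul]
      gcongr
      exact (abs_harmonic_sub_sub_harmonic_le (mem_Icc.1 hm).2).trans (le_abs_self _)
    · rw [Set.indicator_of_notMem hm, norm_zero]
      exact norm_nonneg _

/-- The truncation of `nmzeta k` to the tuples with `m₁ ≤ M`, computed by summing over `m₁`
first. -/
noncomputable def nmzetaTrunc : List ℕ → ℕ → ℝ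
  | [], _ => 1
  | a :: k, M => ∑ m ∈ Icc 1 M, ((m : ℝ) ^ a)⁻¹ * nmzetaTrunc k m

lemma nmzetaTrunc_nonneg (k : List ℕ) (M : ℕ) : 0 ≤ nmzetaTrunc k M := by
  induction k generalizing M with
  | nil => exact zero_le_one
  | cons a k ih => exact sum_nonneg fun m _ => mul_nonneg (by positivity) (ih m)

lemma nmzetaTrunc_le_harmonic_pow {k : List ℕ} (hk : ∀ a ∈ k, 1 ≤ a) (M : ℕ) :
    nmzetaTrunc k M ≤ (harmonic M : ℝ) ^ k.length := by
  induction k generalizing M with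
  | nil => simp [nmzetaTrunc]
  | cons a k ih =>
    obtain ⟨ha, hk⟩ := List.forall_mem_cons.1 hk
    calc nmzetaTrunc (a :: k) M
        ≤ ∑ m ∈ Icc 1 M, (m : ℝ)⁻¹ * (harmonic M : ℝ) ^ k.length := by
          refine sum_le_sum fun m hm => ?_
          obtain ⟨hm1, hmM⟩ := mem_Icc.1 hm
          have hpow : (m : ℝ) ≤ (m : ℝ) ^ a :=
            le_self_pow₀ (by exact_mod_cast hm1) (Nat.one_le_iff_ne_zero.1 ha)
          have hharmonic : (harmonic m : ℝ) ≤ harmonic M := by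
            exact_mod_cast harmonic_monotone hmM
          have hnonneg : (0 : ℝ) ≤ harmonic m := by exact_mod_cast harmonic_nonneg m
          have htrunc := (ih hk m).trans (pow_le_pow_left₀ hnonneg hharmonic _)
          gcongr
          exact nmzetaTrunc_nonneg k m
      _ = (harmonic M : ℝ) ^ (a :: k).length := by
          rw [← sum_mul, List.length_cons, pow_succ', harmonic_eq_sum_Icc]
          push_cast
          rfl

open Asymptotics in
lemma summable_inv_pow_mul_nmzetaTrunc_mul_harmonic {a : ℕ} (ha : 2 ≤ a) {k : List ℕ}
    (hk : ∀ b ∈ k, 1 ≤ b) :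
    Summable fun m : ℕ => ((m : ℝ) ^ a)⁻¹ * nmzetaTrunc k m * harmonic m := by
  have hpow : (fun m : ℕ => ((m : ℝ) ^ a)⁻¹) =O[atTop] fun m : ℕ => (m : ℝ) ^ (-2 : ℝ) := by
    refine IsBigO.of_norm_eventuallyLE ?_
    filter_upwards [eventually_ge_atTop 1] with m hm
    have hm1 : (1 : ℝ) ≤ m := by exact_mod_cast hm
    rw [Real.norm_of_nonneg (by positivity), Real.rpow_neg (by positivity), Real.rpow_two]
    gcongr
  have htrunc : (fun m : ℕ => nmzetaTrunc k m * (harmonic m : ℝ)) =O[atTop]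
      fun m : ℕ => (m : ℝ) ^ (1 / 2 : ℝ) := by
    refine IsBigO.trans (.of_norm_le fun m => ?_)
      (isLittleO_harmonic_pow_rpow (k.length + 1) one_half_pos).isBigO
    have hnonneg : (0 : ℝ) ≤ harmonic m := by exact_mod_cast harmonic_nonneg m
    rw [Real.norm_of_nonneg (mul_nonneg (nmzetaTrunc_nonneg k m) hnonneg), pow_succ]
    gcongr
    exact nmzetaTrunc_le_harmonic_pow hk m
  refine summable_of_isBigO_nat (Real.summable_nat_rpow.2 (by norm_num : (-(3 / 2) : ℝ) < -1)) ?_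
  refine ((hpow.mul htrunc).congr_left fun m => (mul_assoc _ _ _).symm).trans_eventuallyEq ?_
  filter_upwards [eventually_gt_atTop 0] with m hm
  rw [← Real.rpow_add (by exact_mod_cast hm)]
  norm_num

/-- The weakly decreasing `n`-tuples with entries in `{1, …, M}`, over which `nmzetaTrunc` is
summed. -/
def boundedTuples (n M : ℕ) : Finset (Fin n → ℕ) :=
  {f ∈ Fintype.piFinset fun _ => Icc 1 M | ∀ i j, i ≤ j → f j ≤ f i}

lemma mem_boundedTuples {n M : ℕ} {f : Fin n → ℕ} :
    f ∈ boundedTuples n M ↔ (∀ i, 1 ≤ f i ∧ f i ≤ M) ∧ ∀ i j, i ≤ j → f j ≤ f i := by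
  simp [boundedTuples]

lemma cons_mem_boundedTuples {n M m : ℕ} {f : Fin n → ℕ} :
    (Fin.cons m f : Fin (n + 1) → ℕ) ∈ boundedTuples (n + 1) M ↔
      m ∈ Icc 1 M ∧ f ∈ boundedTuples n m := by
  simp only [mem_boundedTuples, Fin.forall_fin_succ, Fin.cons_zero, Fin.cons_succ, mem_Icc,
    Fin.succ_le_succ_iff, Fin.zero_le]
  grind [Fin.le_zero_iff, Fin.succ_ne_zero]

lemma sum_boundedTuples_succ {R : Type*} [AddCommMonoid R] (n M : ℕ) (F : (Fin (n + 1) → ℕ) → R) :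
    ∑ f ∈ boundedTuples (n + 1) M, F f =
      ∑ m ∈ Icc 1 M, ∑ f ∈ boundedTuples n m, F (Fin.cons m f) := by
  rw [sum_sigma']
  refine sum_nbij' (fun f => ⟨f 0, Fin.tail f⟩) (fun p => Fin.cons p.1 p.2) ?_ ?_ ?_ ?_ ?_
  · intro f hf
    rwa [mem_sigma, ← cons_mem_boundedTuples, Fin.cons_self_tail]
  · exact fun p hp => cons_mem_boundedTuples.2 (mem_sigma.1 hp)
  all_goals simp

lemma nmzetaTrunc_eq_sum_boundedTuples (k : List ℕ) (M : ℕ) :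
    nmzetaTrunc k M =
      ∑ f ∈ boundedTuples k.length M, ∏ i, ((f i : ℝ) ^ k.get i)⁻¹ := by
  induction k generalizing M with
  | nil => simp [nmzetaTrunc, boundedTuples]
  | cons a k ih =>
    rw [nmzetaTrunc]
    refine Eq.trans ?_ (sum_boundedTuples_succ k.length M _).symm
    refine sum_congr rfl fun m _ => ?_
    rw [ih, mul_sum]
    refine sum_congr rfl fun f _ => ?_
    exact (Fin.prod_univ_succ (n := k.length)
      fun i => (((Fin.cons m f : Fin (k.length + 1) → ℕ) i : ℝ) ^ (a :: k).get i)⁻¹).symm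

lemma tendsto_sum_of_monotone_of_nonneg {ι : Type*} {f : ι → ℝ} (hf : 0 ≤ f) {β : Type*}
    [Preorder β] [(atTop : Filter β).NeBot] {s : β → Finset ι} (hmono : Monotone s)
    (hmem : ∀ x, ∃ n, x ∈ s n) {c : ℝ} (hc : ∀ n, ∑ x ∈ s n, f x ≤ c) :
    Tendsto (fun n => ∑ x ∈ s n, f x) atTop (𝓝 (∑' x, f x)) := by
  have hs : Tendsto s atTop atTop := tendsto_atTop_finset_of_monotone hmono hmem
  have hsummable : Summable f := by
    refine summable_of_sum_le (c := c) hf fun u => ?_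
    obtain ⟨n, hn⟩ := (hs.eventually_ge_atTop u).exists
    exact (sum_le_sum_of_subset_of_nonneg hn fun x _ _ => hf x).trans (hc n)
  exact hsummable.hasSum.comp hs

lemma tendsto_nmzetaTrunc_of_le {k : List ℕ} {c : ℝ} (hc : ∀ M, nmzetaTrunc k M ≤ c) :
    Tendsto (nmzetaTrunc k) atTop (𝓝 (nmzeta k)) := by
  let p (f : Fin k.length → ℕ) : Prop := (∀ i, 0 < f i) ∧ ∀ i j, i ≤ j → f j ≤ f i
  have hp : ∀ M, ∀ f ∈ boundedTuples k.length M, p f := fun M f hf =>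
    ⟨fun i => ((mem_boundedTuples.1 hf).1 i).1, (mem_boundedTuples.1 hf).2⟩
  have hsum : ∀ M, ∑ f ∈ (boundedTuples k.length M).subtype p,
      ∏ i, ((f.1 i : ℝ) ^ k.get i)⁻¹ = nmzetaTrunc k M := fun M =>
    (sum_subtype_of_mem (fun f => ∏ i, ((f i : ℝ) ^ k.get i)⁻¹) (hp M)).trans
      (nmzetaTrunc_eq_sum_boundedTuples k M).symm
  have hmono : Monotone fun M => (boundedTuples k.length M).subtype p := fun M N hMN f hf => by
    simp only [mem_subtype, mem_boundedTuples] at hf ⊢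
    exact ⟨fun i => ⟨(hf.1 i).1, (hf.1 i).2.trans hMN⟩, hf.2⟩
  have hmem (f : Subtype p) : ∃ M, f ∈ (boundedTuples k.length M).subtype p := by
    refine ⟨∑ i, f.1 i, mem_subtype.2 (mem_boundedTuples.2 ⟨fun i => ⟨f.2.1 i, ?_⟩, f.2.2⟩)⟩
    exact single_le_sum (fun _ _ => Nat.zero_le _) (mem_univ i)
  exact (tendsto_sum_of_monotone_of_nonneg (fun f => prod_nonneg fun i _ => by positivity)
    hmono hmem fun M => (hsum M).trans_le (hc M)).congr hsum

/-- An index `k` for which the series `nmzeta k` converges: its entries are positive and the first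
one is at least `2`. The empty index is excluded, since `[].headI = 0`. -/
structure IsAdmissible (k : List ℕ) : Prop where
  two_le_headI : 2 ≤ k.headI
  one_le : ∀ a ∈ k, 1 ≤ a

lemma IsAdmissible.ne_nil {k : List ℕ} (hk : IsAdmissible k) : k ≠ [] := by
  rintro rfl
  exact absurd hk.two_le_headI (by simp)

lemma isAdmissible_cons {a : ℕ} {k : List ℕ} :
    IsAdmissible (a :: k) ↔ 2 ≤ a ∧ ∀ b ∈ k, 1 ≤ b :=
  ⟨fun h => ⟨h.1, fun b hb => h.2 b (List.mem_cons_of_mem a hb)⟩,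
    fun h => ⟨h.1, List.forall_mem_cons.2 ⟨one_le_two.trans h.1, h.2⟩⟩⟩

theorem IsAdmissible.tendsto_nmzetaTrunc {k : List ℕ} (hk : IsAdmissible k) :
    Tendsto (nmzetaTrunc k) atTop (𝓝 (nmzeta k)) := by
  obtain ⟨a, k, rfl⟩ := List.exists_cons_of_ne_nil hk.ne_nil
  obtain ⟨ha, hk⟩ := isAdmissible_cons.1 hk
  have hnonneg (m : ℕ) : 0 ≤ ((m : ℝ) ^ a)⁻¹ * nmzetaTrunc k m :=
    mul_nonneg (by positivity) (nmzetaTrunc_nonneg k m)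
  refine tendsto_nmzetaTrunc_of_le fun M => le_trans (sum_le_sum fun m hm => ?_)
    ((summable_inv_pow_mul_nmzetaTrunc_mul_harmonic ha hk).sum_le_tsum (Icc 1 M) fun m _ =>
      mul_nonneg (hnonneg m) (by exact_mod_cast harmonic_nonneg m))
  exact le_mul_of_one_le_right (hnonneg m) (by exact_mod_cast one_le_harmonic (mem_Icc.1 hm).1)

theorem IsAdmissible.tendsto_centeredConv_nmzetaTrunc {k : List ℕ} (hk : IsAdmissible k) :
    Tendsto (centeredConv (nmzetaTrunc k)) atTop (𝓝 0) := by
  obtain ⟨a, k, rfl⟩ := List.exists_cons_of_ne_nil hk.ne_nil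
  obtain ⟨ha, hk⟩ := isAdmissible_cons.1 hk
  exact tendsto_centeredConv_sum_Icc (summable_inv_pow_mul_nmzetaTrunc_mul_harmonic ha hk)

/-- The list `k` with its entry at position `i` replaced by the list `l`. -/
def spliceAt (k : List ℕ) (i : ℕ) (l : List ℕ) : List ℕ :=
  k.take i ++ l ++ k.drop (i + 1)

lemma spliceAt_cons_zero (a : ℕ) (k l : List ℕ) : spliceAt (a :: k) 0 l = l ++ k := rfl

lemma spliceAt_cons_succ (a : ℕ) (k : List ℕ) (i : ℕ) (l : List ℕ) :
    spliceAt (a :: k) (i + 1) l = a :: spliceAt k i l := rfl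

lemma IsAdmissible.spliceAt {k : List ℕ} (hk : IsAdmissible k) (i : ℕ) {a : ℕ} {l : List ℕ}
    (ha : 1 ≤ a) (hl : ∀ b ∈ l, 1 ≤ b) (hhead : i = 0 → 2 ≤ a) :
    IsAdmissible (spliceAt k i (a :: l)) where
  two_le_headI := by
    obtain ⟨b, k, rfl⟩ := List.exists_cons_of_ne_nil hk.ne_nil
    cases i with
    | zero => exact hhead rfl
    | succ i => exact hk.two_le_headI
  one_le b hb := by
    simp only [NonstrictMZV.spliceAt, List.mem_append, List.mem_cons] at hb
    obtain (hb | rfl | hb) | hb := hb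
    · exact hk.one_le b (List.mem_of_mem_take hb)
    · exact ha
    · exact hl b hb
    · exact hk.one_le b (List.mem_of_mem_drop hb)

/-- The right-hand side minus the left-hand side of Hoffman's relation for the index `k`, with an
arbitrary function `F` of the index in place of `nmzeta`, as a linear functional of `F`. The
condition `kᵢ ≥ 2` on the right is implicit: otherwise the sum over `j` is empty. -/
noncomputable def hoffmanDefect (k : List ℕ) : (List ℕ → ℝ) →ₗ[ℝ] ℝ :=
  ∑ i ∈ range k.length,
    (∑ j ∈ range (k.getD i 0 - 1), LinearMap.proj (spliceAt k i [k.getD i 0 - j, j + 1]) -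
      ((k.getD i 0 : ℝ) - 1 + if i = k.length - 1 then 1 else 0) •
        LinearMap.proj (spliceAt k i [k.getD i 0 + 1]))

lemma hoffmanDefect_apply (k : List ℕ) (F : List ℕ → ℝ) :
    hoffmanDefect k F =
      ∑ i ∈ range k.length,
        (∑ j ∈ range (k.getD i 0 - 1), F (spliceAt k i [k.getD i 0 - j, j + 1]) -
          ((k.getD i 0 : ℝ) - 1 + if i = k.length - 1 then 1 else 0) *
            F (spliceAt k i [k.getD i 0 + 1])) := by
  simp [hoffmanDefect]

lemma hoffmanDefect_singleton (a : ℕ) (F : List ℕ → ℝ) :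
    hoffmanDefect [a] F =
      ∑ j ∈ range (a - 1), F [a - j, j + 1] - ((a : ℝ) - 1) * F [a + 1] - F [a + 1] := by
  rw [hoffmanDefect_apply, List.length_singleton, sum_range_one]
  simp only [spliceAt_cons_zero, List.getD_cons_zero, List.append_nil, tsub_self, if_true]
  ring

lemma hoffmanDefect_cons (a : ℕ) {k : List ℕ} (hk : k ≠ []) (F : List ℕ → ℝ) :
    hoffmanDefect (a :: k) F =
      ∑ j ∈ range (a - 1), F ((a - j) :: (j + 1) :: k) - ((a : ℝ) - 1) * F ((a + 1) :: k) +
        hoffmanDefect k fun l => F (a :: l) := by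
  obtain ⟨b, k, rfl⟩ := List.exists_cons_of_ne_nil hk
  rw [hoffmanDefect_apply, hoffmanDefect_apply, List.length_cons, sum_range_succ', add_comm]
  simp [spliceAt_cons_zero, spliceAt_cons_succ]

theorem IsAdmissible.tendsto_hoffmanDefect {k : List ℕ} (hk : IsAdmissible k) {α : Type*}
    {f : Filter α} {F : α → List ℕ → ℝ} {F₀ : List ℕ → ℝ}
    (hF : ∀ l, IsAdmissible l → Tendsto (fun x => F x l) f (𝓝 (F₀ l))) :
    Tendsto (fun x => hoffmanDefect k (F x)) f (𝓝 (hoffmanDefect k F₀)) := by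
  simp only [hoffmanDefect_apply]
  refine tendsto_finsetSum _ fun i _ => .sub (tendsto_finsetSum _ fun j hj => ?split)
    (.const_mul _ ?raise)
  case split =>
    have hj := mem_range.1 hj
    exact hF _ (hk.spliceAt i (by omega) (by simp) (by omega))
  case raise =>
    refine hF _ (hk.spliceAt i (by omega) (by simp) ?_)
    rintro rfl
    obtain ⟨b, k, rfl⟩ := List.exists_cons_of_ne_nil hk.ne_nil
    exact Nat.le_succ_of_le hk.two_le_headI

lemma nmzetaTrunc_split {a j : ℕ} (hj : j ≤ a) (k : List ℕ) (M : ℕ) :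
    nmzetaTrunc ((a - j) :: (j + 1) :: k) M =
      ∑ x ∈ Icc 1 M, ∑ b ∈ Ico 1 x,
        ((x : ℝ) ^ (a - j))⁻¹ * ((b : ℝ) ^ (j + 1))⁻¹ * nmzetaTrunc k b +
          nmzetaTrunc ((a + 1) :: k) M := by
  simp only [nmzetaTrunc, ← sum_add_distrib]
  refine sum_congr rfl fun x hx => ?_
  have hdiag : ((x : ℝ) ^ (a - j))⁻¹ * ((x : ℝ) ^ (j + 1))⁻¹ = ((x : ℝ) ^ (a + 1))⁻¹ := by
    rw [← mul_inv, ← pow_add, show a - j + (j + 1) = a + 1 by omega]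
  rw [← Ico_insert_right (mem_Icc.1 hx).1, sum_insert right_notMem_Ico, mul_add, ← mul_assoc,
    hdiag, mul_sum, add_comm]
  simp only [mul_assoc]

lemma sum_nmzetaTrunc_split_sub {a : ℕ} (ha : 1 ≤ a) (k : List ℕ) (M : ℕ) :
    ∑ j ∈ range (a - 1), nmzetaTrunc ((a - j) :: (j + 1) :: k) M -
        ((a : ℝ) - 1) * nmzetaTrunc ((a + 1) :: k) M =
      ∑ x ∈ Icc 1 M, ∑ b ∈ Ico 1 x,
        (∑ j ∈ range (a - 1), ((x : ℝ) ^ (a - j))⁻¹ * ((b : ℝ) ^ (j + 1))⁻¹) *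
          nmzetaTrunc k b := by
  have hsplit := fun j (hj : j ∈ range (a - 1)) =>
    nmzetaTrunc_split (show j ≤ a by grind) k M
  rw [sum_congr rfl hsplit, sum_add_distrib, sum_const, card_range, nsmul_eq_mul, Nat.cast_pred ha,
    add_sub_cancel_right, sum_comm]
  refine sum_congr rfl fun x _ => ?_
  rw [sum_comm]
  simp only [sum_mul]

lemma centeredConv_nmzetaTrunc_cons {a : ℕ} (ha : 1 ≤ a) (k : List ℕ) (M : ℕ) :
    centeredConv (nmzetaTrunc (a :: k)) M =
      ∑ j ∈ range (a - 1), nmzetaTrunc ((a - j) :: (j + 1) :: k) M -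
        ((a : ℝ) - 1) * nmzetaTrunc ((a + 1) :: k) M +
        ∑ x ∈ Icc 1 M, ((x : ℝ) ^ a)⁻¹ * centeredConv (nmzetaTrunc k) x := by
  rw [sum_nmzetaTrunc_split_sub ha, ← sum_add_distrib]
  exact centeredConv_sum_inv_pow_mul (nmzetaTrunc k) ha M

theorem hoffmanDefect_nmzetaTrunc {k : List ℕ} (hne : k ≠ []) (hk : ∀ a ∈ k, 1 ≤ a) (M : ℕ) :
    hoffmanDefect k (fun l => nmzetaTrunc l M) = centeredConv (nmzetaTrunc k) M := by
  induction k, hne using List.recNeNil generalizing M with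
  | singleton a =>
    have hone : nmzetaTrunc [] = fun _ => 1 := rfl
    rw [hoffmanDefect_singleton, centeredConv_nmzetaTrunc_cons (hk a (by simp)), hone,
      sub_eq_add_neg]
    congr 1
    simp [nmzetaTrunc, centeredConv_one, pow_succ, mul_comm]
  | cons a k hne ih =>
    obtain ⟨ha, hk⟩ := List.forall_mem_cons.1 hk
    have hlinear : (fun l => nmzetaTrunc (a :: l) M) =
        ∑ x ∈ Icc 1 M, ((x : ℝ) ^ a)⁻¹ • fun l => nmzetaTrunc l x := by
      ext l
      simp [nmzetaTrunc]
    rw [hoffmanDefect_cons a hne, centeredConv_nmzetaTrunc_cons ha, hlinear, map_sum]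
    simp only [map_smul, ih hk, smul_eq_mul]

theorem IsAdmissible.hoffmanDefect_nmzeta {k : List ℕ} (hk : IsAdmissible k) :
    hoffmanDefect k nmzeta = 0 := by
  have hlim := hk.tendsto_hoffmanDefect fun l hl => hl.tendsto_nmzetaTrunc
  simp only [hoffmanDefect_nmzetaTrunc hk.ne_nil hk.one_le] at hlim
  exact tendsto_nhds_unique hlim hk.tendsto_centeredConv_nmzetaTrunc

end NonstrictMZV

/-- Hoffman-type relations for non-strict multiple zeta values:
for positive integers k₁,…,kₙ with k₁ ≥ 2,
Σᵢ (kᵢ − 1 + δₙᵢ) ζ̄(k₁,…,kᵢ+1,…,kₙ)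
  = Σ_{i, kᵢ ≥ 2} Σ_{j=0}^{kᵢ−2} ζ̄(k₁,…,k_{i−1}, kᵢ−j, j+1, k_{i+1},…,kₙ). -/
theorem nmzv_hoffman_relations (k : List ℕ) (hne : k ≠ [])
    (hpos : ∀ a ∈ k, 1 ≤ a) (h2 : 2 ≤ k.headI) :
    ∑ i ∈ Finset.range k.length,
      (((k.getD i 0 : ℝ) - 1) + (if i = k.length - 1 then 1 else 0)) *
        nmzeta (k.take i ++ [k.getD i 0 + 1] ++ k.drop (i + 1))
    = ∑ i ∈ Finset.range k.length,
        if 2 ≤ k.getD i 0 then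
          ∑ j ∈ Finset.range (k.getD i 0 - 1),
            nmzeta (k.take i ++ [k.getD i 0 - j, j + 1] ++ k.drop (i + 1))
        else 0 := by
  have hk : NonstrictMZV.IsAdmissible k := ⟨h2, hpos⟩
  have hzero := hk.hoffmanDefect_nmzeta
  rw [NonstrictMZV.hoffmanDefect_apply, sum_sub_distrib, sub_eq_zero] at hzero
  refine hzero.symm.trans (sum_congr rfl fun i _ => ?_)
  split_ifs with hi
  · rfl
  · rw [show k.getD i 0 - 1 = 0 by omega, sum_range_zero]
end

section
/- For all positive integers k1, …, kn with k1 ≥ 2, one has Σ_{i=1}^{n} ζ(k1, …, k_{i−1}, k_i + 1, k_{i+1}, …, kn) = Σ_{1 ≤ i ≤ n, k_i ≥ 2} Σ_{j=0}^{k_i − 2} ζ(k1, …, k_{i−1}, k_i − j, j + 1, k_{i+1}, …, kn) (Hoffman's relations). -/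
open scoped BigOperators

/-- The multiple zeta value ζ(k₁,…,kₙ): the sum over all strictly decreasing
tuples m₁ > m₂ > ⋯ > mₙ > 0 of 1/(m₁^{k₁}⋯mₙ^{kₙ}). -/
noncomputable def mzeta (ks : List ℕ) : ℝ :=
  ∑' m : {f : Fin ks.length → ℕ // (∀ i, 0 < f i) ∧
      ∀ i j : Fin ks.length, i < j → f j < f i},
    ∏ i : Fin ks.length, ((m.1 i : ℝ) ^ ks.get i)⁻¹

/-!
Truncate every multiple zeta value to summation indices below `N`. Decomposing
`∑ 1 / (m ^ (k - j) q ^ (j + 1))`, summed over `0 ≤ j ≤ k - 2`, into partial fractions with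
denominators `m - q` shows that the truncated sums satisfy Hoffman's relation up to the error
`∑ 1 / (m₁ ^ k₁ ⋯ mₙ ^ kₙ a)`, the sum being over `N > m₁ > ⋯ > mₙ > 0` and `N - m₁ ≤ a < N`:
splitting the first letter also produces the errors for `(k₂, …, kₙ)` truncated at `m₁`, and these
cancel by induction.
For `k₁ ≥ 2` the error tends to `0` by dominated convergence, because the sum of `1 / a` is at most
`1 + log m₁` and, for fixed `m₁`, tends to `0`.
-/

section HoffmanRelations

open Finset Filter Topology

/-- The multiple zeta value `ζ(k₁, …, kₙ)` truncated to indices `N > m₁ > ⋯ > mₙ > 0`. -/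
noncomputable def truncMzeta : List ℕ → ℕ → ℝ
  | [], _ => 1
  | k :: l, N => ∑ m ∈ Ico 1 N, ((m : ℝ) ^ k)⁻¹ * truncMzeta l m

/-- The defect of Hoffman's relation for multiple zeta values truncated at `N`: the sum defining
`truncMzeta` with the extra factor `∑ 1 / a` over `N - m₁ ≤ a < N`, and `0` for the empty index. -/
noncomputable def truncDefect : List ℕ → ℕ → ℝ
  | [], _ => 0
  | k :: l, N => ∑ m ∈ Ico 1 N, ((m : ℝ) ^ k)⁻¹ * truncMzeta l m * ∑ a ∈ Ico (N - m) N, (a : ℝ)⁻¹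

/-- An index `k₁, …, kₙ` of a convergent multiple zeta value. The head of the empty list is `0`, so
the empty index is excluded. -/
def IsAdmissible (k : List ℕ) : Prop :=
  (∀ a ∈ k, 1 ≤ a) ∧ 2 ≤ k.headI

/-- The sum of `f` over all words obtained from `k` by replacing one letter `a` by one of the words
`w a j`, `j ∈ s a`. For linear `f` this is `f` applied to the image of `k` under the derivation of
noncommutative polynomials with `a ↦ ∑ j ∈ s a, w a j`. -/
def substSum {ι : Type*} (s : ℕ → Finset ι) (w : ℕ → ι → List ℕ) (f : List ℕ → ℝ) (k : List ℕ) :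
    ℝ :=
  ∑ i ∈ range k.length, ∑ j ∈ s (k.getD i 0),
    f (k.take i ++ w (k.getD i 0) j ++ k.drop (i + 1))

/-- The left-hand side of Hoffman's relation for `f` in place of `ζ`. -/
abbrev raiseSum (f : List ℕ → ℝ) (k : List ℕ) : ℝ :=
  substSum (fun _ => range 1) (fun a _ => [a + 1]) f k

/-- The right-hand side of Hoffman's relation for `f` in place of `ζ`. The letter `1` contributes
nothing, its range of summation being empty. -/
abbrev splitSum (f : List ℕ → ℝ) (k : List ℕ) : ℝ :=
  substSum (fun a => range (a - 1)) (fun a j => [a - j, j + 1]) f k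

/-! ### Substitution sums -/

section SubstSum

variable {ι : Type*} {s : ℕ → Finset ι} {w : ℕ → ι → List ℕ}

lemma substSum_cons (f : List ℕ → ℝ) (a : ℕ) (l : List ℕ) :
    substSum s w f (a :: l) =
      ∑ j ∈ s a, f (w a j ++ l) + substSum s w (fun l' => f (a :: l')) l := by
  rw [substSum, List.length_cons, sum_range_succ', add_comm]
  simp [substSum]

lemma substSum_sum_mul {κ : Type*} (t : Finset κ) (c : κ → ℝ) (g : κ → List ℕ → ℝ) (l : List ℕ) :
    substSum s w (fun l' => ∑ m ∈ t, c m * g m l') l = ∑ m ∈ t, c m * substSum s w (g m) l := by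
  simp only [substSum, mul_sum]
  rw [sum_comm]
  exact sum_congr rfl fun i _ => sum_comm

lemma substSum_truncMzeta_cons (a : ℕ) (l : List ℕ) (N : ℕ) :
    substSum s w (truncMzeta · N) (a :: l) =
      ∑ j ∈ s a, truncMzeta (w a j ++ l) N +
        ∑ m ∈ Ico 1 N, ((m : ℝ) ^ a)⁻¹ * substSum s w (truncMzeta · m) l := by
  rw [substSum_cons, ← substSum_sum_mul]
  rfl

lemma IsAdmissible.subst {k : List ℕ} (hk : IsAdmissible k) (i : ℕ) {v : List ℕ}
    (hpos : ∀ b ∈ v, 1 ≤ b) (hhead : 2 ≤ k.getD i 0 → 2 ≤ v.headI) :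
    IsAdmissible (k.take i ++ v ++ k.drop (i + 1)) := by
  obtain ⟨hkpos, hkhead⟩ := hk
  refine ⟨fun b hb => ?_, ?_⟩
  · rw [List.mem_append, List.mem_append] at hb
    rcases hb with (hb | hb) | hb
    exacts [hkpos b (List.mem_of_mem_take hb), hpos b hb, hkpos b (List.mem_of_mem_drop hb)]
  · rcases k with _ | ⟨a, l⟩
    · simp at hkhead
    rcases i with _ | i
    · rcases v with _ | ⟨b, v⟩ <;> simpa using hhead hkhead
    · simpa using hkhead

lemma tendsto_substSum {α : Type*} {L : Filter α} {f : α → List ℕ → ℝ} {g : List ℕ → ℝ}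
    (hf : ∀ l, IsAdmissible l → Tendsto (f · l) L (𝓝 (g l)))
    (hpos : ∀ a, ∀ j ∈ s a, ∀ b ∈ w a j, 1 ≤ b)
    (hhead : ∀ a, ∀ j ∈ s a, 2 ≤ a → 2 ≤ (w a j).headI) {k : List ℕ} (hk : IsAdmissible k) :
    Tendsto (fun N => substSum s w (f N) k) L (𝓝 (substSum s w g k)) :=
  tendsto_finsetSum _ fun i _ => tendsto_finsetSum _ fun j hj =>
    hf _ (hk.subst i (hpos _ j hj) (hhead _ j hj))

end SubstSum

/-! ### Hoffman's relation for truncated sums -/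

lemma sum_inv_pow_mul_inv_pow {K : Type*} [Field K] (n : ℕ) {x y : K} (hx : x ≠ 0) (hy : y ≠ 0)
    (hxy : x ≠ y) :
    ∑ j ∈ range n, (x ^ (n + 1 - j))⁻¹ * (y ^ (j + 1))⁻¹ =
      (y ^ (n + 1))⁻¹ * ((x - y)⁻¹ - x⁻¹) - (x ^ (n + 1))⁻¹ * (x - y)⁻¹ := by
  have hsub : x - y ≠ 0 := sub_ne_zero.mpr hxy
  induction n with
  | zero =>
    simp only [range_zero, sum_empty]
    field_simp
    ring
  | succ n ih =>
    have pull_out : ∑ j ∈ range n, (x ^ (n + 1 + 1 - j))⁻¹ * (y ^ (j + 1))⁻¹ =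
        x⁻¹ * ∑ j ∈ range n, (x ^ (n + 1 - j))⁻¹ * (y ^ (j + 1))⁻¹ := by
      rw [mul_sum]
      refine sum_congr rfl fun j hj => ?_
      rw [mem_range] at hj
      rw [Nat.succ_sub (by omega : j ≤ n + 1), pow_succ', mul_inv, mul_assoc]
    rw [sum_range_succ, pull_out, ih, show n + 1 + 1 - n = 2 by omega]
    field_simp
    ring

lemma sum_Ico_inv_natCast_sub_left (q N : ℕ) :
    ∑ m ∈ Ico (q + 1) N, ((N : ℝ) - m)⁻¹ = ∑ a ∈ Ico 1 (N - q), (a : ℝ)⁻¹ := by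
  have reflect := sum_Ico_reflect (fun a : ℕ => (a : ℝ)⁻¹) (q + 1) N.le_succ
  rw [Nat.add_sub_cancel_left, Nat.add_sub_add_right] at reflect
  rw [← reflect]
  refine sum_congr rfl fun m hm => ?_
  rw [Nat.cast_sub (mem_Ico.mp hm).2.le]

lemma sum_Ico_inv_natCast_sub_right (q N : ℕ) :
    ∑ m ∈ Ico (q + 1) N, ((m : ℝ) - q)⁻¹ = ∑ a ∈ Ico 1 (N - q), (a : ℝ)⁻¹ := by
  rw [sum_Ico_eq_sum_range, sum_Ico_eq_sum_range, Nat.sub_sub]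
  refine sum_congr rfl fun i _ => ?_
  push_cast
  ring_nf

lemma sum_Ico_inv_sub_inv {q N : ℕ} (hq : 1 ≤ q) (hqN : q < N) :
    ∑ m ∈ Ico (q + 1) N, (((m : ℝ) - q)⁻¹ - (m : ℝ)⁻¹) =
      ∑ a ∈ Ico 1 q, (a : ℝ)⁻¹ + (q : ℝ)⁻¹ - ∑ a ∈ Ico (N - q) N, (a : ℝ)⁻¹ := by
  have split_left := sum_Ico_consecutive (fun a : ℕ => (a : ℝ)⁻¹)
    (by omega : 1 ≤ N - q) (Nat.sub_le N q)
  have split_right := sum_Ico_consecutive (fun a : ℕ => (a : ℝ)⁻¹)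
    (by omega : 1 ≤ q + 1) (by omega : q + 1 ≤ N)
  rw [sum_Ico_succ_top hq] at split_right
  rw [sum_sub_distrib, sum_Ico_inv_natCast_sub_right]
  linarith

lemma sum_truncMzeta_mul_inv_sub (l : List ℕ) (N : ℕ) :
    ∑ m ∈ Ico 1 N, truncMzeta l m * ((N : ℝ) - m)⁻¹ =
      (∑ a ∈ Ico 1 N, (a : ℝ)⁻¹) * truncMzeta l N - truncDefect l N := by
  rcases l with _ | ⟨k, l⟩
  · simpa [truncMzeta, truncDefect] using sum_Ico_inv_natCast_sub_left 0 N
  · simp only [truncMzeta, truncDefect, sum_mul]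
    rw [← sum_Ico_Ico_comm' 1 N fun q m =>
      ((q : ℝ) ^ k)⁻¹ * truncMzeta l q * ((N : ℝ) - m)⁻¹, ← sum_mul, mul_sum, ← sum_sub_distrib]
    refine sum_congr rfl fun q hq => ?_
    have split := sum_Ico_consecutive (fun a : ℕ => (a : ℝ)⁻¹)
      (by grind : 1 ≤ N - q) (Nat.sub_le N q)
    rw [← mul_sum, sum_Ico_inv_natCast_sub_left, ← split]
    ring

lemma sum_inv_pow_mul_truncMzeta_cons (n : ℕ) (l : List ℕ) (m : ℕ) :
    ∑ j ∈ range n, ((m : ℝ) ^ (n + 1 - j))⁻¹ * truncMzeta ((j + 1) :: l) m =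
      ∑ q ∈ Ico 1 m, ((q : ℝ) ^ (n + 1))⁻¹ * truncMzeta l q * (((m : ℝ) - q)⁻¹ - (m : ℝ)⁻¹) -
        ((m : ℝ) ^ (n + 1))⁻¹ * ∑ q ∈ Ico 1 m, truncMzeta l q * ((m : ℝ) - q)⁻¹ := by
  simp only [truncMzeta, mul_sum]
  rw [sum_comm, ← sum_sub_distrib]
  refine sum_congr rfl fun q hq => ?_
  obtain ⟨hq, hqm⟩ := mem_Ico.mp hq
  have partial_fractions := sum_inv_pow_mul_inv_pow (K := ℝ) n (x := m) (y := q)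
    (by norm_cast; omega) (by norm_cast; omega) (by norm_cast; omega)
  simp only [← mul_assoc]
  rw [← sum_mul, partial_fractions]
  ring

lemma sum_truncMzeta_split (n : ℕ) (l : List ℕ) (N : ℕ) :
    ∑ j ∈ range n, truncMzeta ((n + 1 - j) :: (j + 1) :: l) N =
      ∑ m ∈ Ico 1 N, ((m : ℝ) ^ (n + 1))⁻¹ * truncMzeta l m *
          (∑ a ∈ Ico 1 m, (a : ℝ)⁻¹ + (m : ℝ)⁻¹ - ∑ a ∈ Ico (N - m) N, (a : ℝ)⁻¹) -
        ∑ m ∈ Ico 1 N, ((m : ℝ) ^ (n + 1))⁻¹ *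
          ((∑ a ∈ Ico 1 m, (a : ℝ)⁻¹) * truncMzeta l m - truncDefect l m) := by
  calc ∑ j ∈ range n, truncMzeta ((n + 1 - j) :: (j + 1) :: l) N
      = ∑ m ∈ Ico 1 N, ∑ j ∈ range n,
          ((m : ℝ) ^ (n + 1 - j))⁻¹ * truncMzeta ((j + 1) :: l) m := sum_comm
    _ = ∑ q ∈ Ico 1 N, ∑ m ∈ Ico (q + 1) N,
          ((q : ℝ) ^ (n + 1))⁻¹ * truncMzeta l q * (((m : ℝ) - q)⁻¹ - (m : ℝ)⁻¹) -
        ∑ m ∈ Ico 1 N, ((m : ℝ) ^ (n + 1))⁻¹ *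
          ((∑ a ∈ Ico 1 m, (a : ℝ)⁻¹) * truncMzeta l m - truncDefect l m) := by
        simp only [sum_inv_pow_mul_truncMzeta_cons, sum_truncMzeta_mul_inv_sub, sum_sub_distrib,
          sum_Ico_Ico_comm']
    _ = _ := by
        congr 1
        refine sum_congr rfl fun q hq => ?_
        rw [← mul_sum, sum_Ico_inv_sub_inv (mem_Ico.mp hq).1 (mem_Ico.mp hq).2]

lemma truncMzeta_succ_add_sum_truncDefect (n : ℕ) (l : List ℕ) (N : ℕ) :
    truncMzeta ((n + 2) :: l) N + ∑ m ∈ Ico 1 N, ((m : ℝ) ^ (n + 1))⁻¹ * truncDefect l m =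
      ∑ j ∈ range n, truncMzeta ((n + 1 - j) :: (j + 1) :: l) N +
        truncDefect ((n + 1) :: l) N := by
  rw [sum_truncMzeta_split, truncMzeta, truncDefect, ← sum_sub_distrib, ← sum_add_distrib,
    ← sum_add_distrib]
  refine sum_congr rfl fun m _ => ?_
  rw [pow_succ _ (n + 1), mul_inv]
  ring

theorem raiseSum_truncMzeta {k : List ℕ} (hk : ∀ a ∈ k, 1 ≤ a) (N : ℕ) :
    raiseSum (truncMzeta · N) k = splitSum (truncMzeta · N) k + truncDefect k N := by
  induction k generalizing N with
  | nil => simp [substSum, truncDefect]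
  | cons a l ih =>
    obtain ⟨ha, hl⟩ := List.forall_mem_cons.mp hk
    obtain ⟨n, rfl⟩ := Nat.exists_eq_add_of_le' ha
    have first_letter := truncMzeta_succ_add_sum_truncDefect n l N
    simp only [substSum_truncMzeta_cons, ih hl, mul_add, sum_add_distrib, sum_range_one,
      List.cons_append, List.nil_append, Nat.add_sub_cancel]
    linarith

/-! ### Bounds and the limit of the defect -/

lemma truncMzeta_nonneg (l : List ℕ) (N : ℕ) : 0 ≤ truncMzeta l N := by
  induction l generalizing N with
  | nil => exact zero_le_one
  | cons k l ih => exact sum_nonneg fun m _ => mul_nonneg (by positivity) (ih m)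

lemma one_add_log_natCast_nonneg (n : ℕ) : 0 ≤ 1 + Real.log n :=
  add_nonneg zero_le_one (Real.log_natCast_nonneg n)

lemma sum_Ico_inv_le_one_add_log {b c n : ℕ} (hb : 1 ≤ b) (hc : c ≤ b + n) :
    ∑ a ∈ Ico b c, (a : ℝ)⁻¹ ≤ 1 + Real.log n := by
  calc ∑ a ∈ Ico b c, (a : ℝ)⁻¹
      ≤ ∑ a ∈ Ico b (b + n), (a : ℝ)⁻¹ := by gcongr
    _ = ∑ i ∈ range n, ((b + i : ℕ) : ℝ)⁻¹ := by
        rw [sum_Ico_eq_sum_range, Nat.add_sub_cancel_left]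
    _ ≤ ∑ i ∈ range n, ((i + 1 : ℕ) : ℝ)⁻¹ := by
        gcongr ∑ i ∈ range n, (Nat.cast ?_)⁻¹ with i
        omega
    _ = harmonic n := by simp [harmonic]
    _ ≤ 1 + Real.log n := harmonic_le_one_add_log n

lemma truncMzeta_le_one_add_log_pow {l : List ℕ} (hl : ∀ a ∈ l, 1 ≤ a) (N : ℕ) :
    truncMzeta l N ≤ (1 + Real.log N) ^ l.length := by
  induction l generalizing N with
  | nil => simp [truncMzeta]
  | cons k l ih =>
    obtain ⟨hk, hl⟩ := List.forall_mem_cons.mp hl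
    have term_le : ∀ m ∈ Ico 1 N,
        ((m : ℝ) ^ k)⁻¹ * truncMzeta l m ≤ (m : ℝ)⁻¹ * (1 + Real.log N) ^ l.length := by
      intro m hm
      obtain ⟨hm, hmN⟩ := mem_Ico.mp hm
      have one_le : (1 : ℝ) ≤ m := by exact_mod_cast hm
      have := one_add_log_natCast_nonneg m
      gcongr
      · exact truncMzeta_nonneg l m
      · exact le_self_pow₀ one_le (by omega)
      · exact (ih hl m).trans (by gcongr)
    calc truncMzeta (k :: l) N
        ≤ ∑ m ∈ Ico 1 N, (m : ℝ)⁻¹ * (1 + Real.log N) ^ l.length := sum_le_sum term_le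
      _ = (∑ m ∈ Ico 1 N, (m : ℝ)⁻¹) * (1 + Real.log N) ^ l.length := (sum_mul ..).symm
      _ ≤ (1 + Real.log N) * (1 + Real.log N) ^ l.length := by
          have := one_add_log_natCast_nonneg N
          gcongr
          exact sum_Ico_inv_le_one_add_log le_rfl (by omega)
      _ = (1 + Real.log N) ^ (k :: l).length := (pow_succ' ..).symm

lemma summable_inv_pow_mul_one_add_log_pow {p : ℕ} (hp : 2 ≤ p) (r : ℕ) :
    Summable fun m : ℕ => ((m : ℝ) ^ p)⁻¹ * (1 + Real.log m) ^ r := by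
  have log_pow_isBigO : (fun x : ℝ => (1 + Real.log x) ^ r) =O[atTop] fun x => x ^ (1 / 2 : ℝ) := by
    have one_add_log : (fun x : ℝ => 1 + Real.log x) =O[atTop] Real.log :=
      (Real.isLittleO_const_log_atTop (c := 1)).isBigO.add (Asymptotics.isBigO_refl _ _)
    have log_pow := isLittleO_log_rpow_rpow_atTop (s := 1 / 2) r (by norm_num)
    simp only [Real.rpow_natCast] at log_pow
    exact (one_add_log.pow r).trans log_pow.isBigO
  have summable_rpow : Summable fun m : ℕ => (m : ℝ) ^ (1 / 2 - p : ℝ) := by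
    have : (2 : ℝ) ≤ p := by exact_mod_cast hp
    exact Real.summable_nat_rpow.mpr (by linarith)
  refine summable_of_isBigO_nat summable_rpow ?_
  refine ((Asymptotics.isBigO_refl (fun m : ℕ => ((m : ℝ) ^ p)⁻¹) atTop).mul
    (log_pow_isBigO.comp_tendsto tendsto_natCast_atTop_atTop)).congr' .rfl ?_
  filter_upwards [eventually_gt_atTop 0] with m hm
  rw [Real.rpow_sub (by exact_mod_cast hm), Real.rpow_natCast, Function.comp_apply]
  exact inv_mul_eq_div _ _

lemma tendsto_sum_Ico_sub_inv (m : ℕ) :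
    Tendsto (fun N : ℕ => ∑ a ∈ Ico (N - m) N, (a : ℝ)⁻¹) atTop (𝓝 0) := by
  have shifted : Tendsto (fun N : ℕ => ∑ i ∈ range m, ((N + i : ℕ) : ℝ)⁻¹) atTop (𝓝 0) := by
    rw [← sum_const_zero (s := range m)]
    exact tendsto_finsetSum _ fun i _ =>
      (tendsto_add_atTop_iff_nat i).mpr tendsto_inv_atTop_nhds_zero_nat
  rw [← tendsto_add_atTop_iff_nat m]
  simpa only [Nat.add_sub_cancel, sum_Ico_eq_sum_range, Nat.add_sub_cancel_left] using shifted

lemma inv_pow_mul_truncMzeta_mul_sum_inv_le (p : ℕ) {l : List ℕ} (hl : ∀ a ∈ l, 1 ≤ a) {m N : ℕ}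
    (hmN : m < N) :
    ((m : ℝ) ^ p)⁻¹ * truncMzeta l m * ∑ a ∈ Ico (N - m) N, (a : ℝ)⁻¹ ≤
      ((m : ℝ) ^ p)⁻¹ * (1 + Real.log m) ^ (l.length + 1) := by
  have := one_add_log_natCast_nonneg m
  rw [pow_succ, ← mul_assoc]
  gcongr
  · exact truncMzeta_le_one_add_log_pow hl m
  · exact sum_Ico_inv_le_one_add_log (by omega) (by omega)

theorem tendsto_truncDefect {k : List ℕ} (hk : IsAdmissible k) :
    Tendsto (truncDefect k) atTop (𝓝 0) := by
  rcases k with _ | ⟨p, l⟩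
  · exact tendsto_const_nhds
  obtain ⟨hpos, hp⟩ := hk
  obtain ⟨-, hl⟩ := List.forall_mem_cons.mp hpos
  let term (N m : ℕ) : ℝ := ((m : ℝ) ^ p)⁻¹ * truncMzeta l m * ∑ a ∈ Ico (N - m) N, (a : ℝ)⁻¹
  have dominated (N m : ℕ) : ‖(Ico 1 N : Set ℕ).indicator (term N) m‖ ≤
      ((m : ℝ) ^ p)⁻¹ * (1 + Real.log m) ^ (l.length + 1) := by
    by_cases hm : m ∈ (Ico 1 N : Set ℕ)
    · have := truncMzeta_nonneg l m
      rw [Set.indicator_of_mem hm, Real.norm_of_nonneg (by positivity)]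
      exact inv_pow_mul_truncMzeta_mul_sum_inv_le p hl (mem_Ico.mp hm).2
    · have := one_add_log_natCast_nonneg m
      rw [Set.indicator_of_notMem hm, norm_zero]
      positivity
  have pointwise (m : ℕ) :
      Tendsto (fun N => (Ico 1 N : Set ℕ).indicator (term N) m) atTop (𝓝 0) := by
    have term_tendsto : Tendsto (term · m) atTop (𝓝 0) := by
      simpa only [mul_zero] using
        (tendsto_sum_Ico_sub_inv m).const_mul (((m : ℝ) ^ p)⁻¹ * truncMzeta l m)
    exact squeeze_zero_norm (fun N => norm_indicator_le_norm_self _ _)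
      (by simpa only [norm_zero] using term_tendsto.norm)
  have limit := tendsto_tsum_of_dominated_convergence
    (summable_inv_pow_mul_one_add_log_pow hp (l.length + 1)) pointwise (.of_forall dominated)
  rw [tsum_zero] at limit
  exact limit.congr fun N => (sum_eq_tsum_indicator _ _).symm

/-! ### Convergence of truncated sums -/

/-- The strictly decreasing `n`-tuples of positive integers below `N`. -/
def decreasingTuples (n N : ℕ) : Finset (Fin n → ℕ) :=
  {f ∈ Fintype.piFinset fun _ => Ico 1 N | StrictAnti f}

lemma mem_decreasingTuples {n N : ℕ} {f : Fin n → ℕ} :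
    f ∈ decreasingTuples n N ↔ (∀ i, f i < N) ∧ (∀ i, 0 < f i) ∧ StrictAnti f := by
  simp only [decreasingTuples, mem_filter, Fintype.mem_piFinset, mem_Ico, Nat.succ_le_iff,
    forall_and]
  tauto

lemma strictAnti_cons_iff {α : Type*} [Preorder α] {n : ℕ} {x : α} {f : Fin n → α} :
    StrictAnti (Fin.cons x f : Fin (n + 1) → α) ↔ (∀ i, f i < x) ∧ StrictAnti f := by
  simp [StrictAnti, Fin.forall_fin_succ]

lemma cons_mem_decreasingTuples {n N m : ℕ} {f : Fin n → ℕ} :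
    (Fin.cons m f : Fin (n + 1) → ℕ) ∈ decreasingTuples (n + 1) N ↔
      m ∈ Ico 1 N ∧ f ∈ decreasingTuples n m := by
  simp only [mem_decreasingTuples, strictAnti_cons_iff, Fin.forall_fin_succ, Fin.cons_zero,
    Fin.cons_succ, mem_Ico]
  grind

lemma sum_decreasingTuples_succ {M : Type*} [AddCommMonoid M] (n N : ℕ)
    (g : (Fin (n + 1) → ℕ) → M) :
    ∑ f ∈ decreasingTuples (n + 1) N, g f =
      ∑ m ∈ Ico 1 N, ∑ f ∈ decreasingTuples n m, g (Fin.cons m f) := by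
  rw [sum_sigma']
  refine sum_nbij' (fun f => ⟨f 0, Fin.tail f⟩) (fun x => Fin.cons x.1 x.2) ?_ ?_ ?_ ?_ ?_
  · intro f hf
    rw [← Fin.cons_self_tail f] at hf
    exact mem_sigma.mpr (cons_mem_decreasingTuples.mp hf)
  · intro x hx
    exact cons_mem_decreasingTuples.mpr (mem_sigma.mp hx)
  · simp
  · simp
  · simp

lemma sum_decreasingTuples_eq_truncMzeta (l : List ℕ) (N : ℕ) :
    ∑ f ∈ decreasingTuples l.length N, ∏ i, ((f i : ℝ) ^ l.get i)⁻¹ = truncMzeta l N := by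
  induction l generalizing N with
  | nil => simp [decreasingTuples, truncMzeta, Subsingleton.strictAnti]
  | cons k l ih =>
    simp only [List.length_cons, sum_decreasingTuples_succ, truncMzeta, ← ih, mul_sum,
      Fin.prod_univ_succ]
    simp

lemma exists_truncMzeta_le {k : List ℕ} (hk : IsAdmissible k) : ∃ C, ∀ N, truncMzeta k N ≤ C := by
  rcases k with _ | ⟨p, l⟩
  · exact ⟨1, fun N => le_rfl⟩
  obtain ⟨hpos, hp⟩ := hk
  obtain ⟨-, hl⟩ := List.forall_mem_cons.mp hpos
  refine ⟨∑' m : ℕ, ((m : ℝ) ^ p)⁻¹ * (1 + Real.log m) ^ l.length, fun N => ?_⟩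
  calc truncMzeta (p :: l) N
      ≤ ∑ m ∈ Ico 1 N, ((m : ℝ) ^ p)⁻¹ * (1 + Real.log m) ^ l.length := by
        rw [truncMzeta]
        gcongr with m
        exact truncMzeta_le_one_add_log_pow hl m
    _ ≤ ∑' m : ℕ, ((m : ℝ) ^ p)⁻¹ * (1 + Real.log m) ^ l.length :=
        (summable_inv_pow_mul_one_add_log_pow hp _).sum_le_tsum _ fun m _ =>
          mul_nonneg (by positivity) (pow_nonneg (one_add_log_natCast_nonneg m) _)

lemma tendsto_sum_tsum_of_nonneg_of_le {ι α : Type*} {L : Filter α} [L.NeBot] {g : ι → ℝ}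
    (hg : 0 ≤ g) {F : α → Finset ι} (hF : Tendsto F L atTop) {C : ℝ}
    (hC : ∀ N, ∑ x ∈ F N, g x ≤ C) :
    Tendsto (fun N => ∑ x ∈ F N, g x) L (𝓝 (∑' x, g x)) := by
  have summable : Summable g := by
    refine summable_of_sum_le (c := C) hg fun u => ?_
    obtain ⟨N, hN⟩ := (hF.eventually_ge_atTop u).exists
    exact (sum_le_sum_of_subset_of_nonneg hN fun x _ _ => hg x).trans (hC N)
  exact summable.hasSum.comp hF

theorem tendsto_truncMzeta {k : List ℕ} (hk : IsAdmissible k) :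
    Tendsto (truncMzeta k) atTop (𝓝 (mzeta k)) := by
  classical
  let P (f : Fin k.length → ℕ) : Prop := (∀ i, 0 < f i) ∧ ∀ i j, i < j → f j < f i
  let F (N : ℕ) : Finset {f // P f} := (decreasingTuples k.length N).subtype P
  have mem_F {N : ℕ} {f : {f // P f}} : f ∈ F N ↔ ∀ i, f.1 i < N := by
    rw [mem_subtype, mem_decreasingTuples, and_iff_left ⟨f.2.1, f.2.2⟩]
  have sum_F (N : ℕ) :
      ∑ f ∈ F N, ∏ i, ((f.1 i : ℝ) ^ k.get i)⁻¹ = truncMzeta k N := by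
    rw [← sum_decreasingTuples_eq_truncMzeta]
    exact sum_subtype_of_mem (fun f => ∏ i, ((f i : ℝ) ^ k.get i)⁻¹)
      fun f hf => (mem_decreasingTuples.mp hf).2
  have tendsto_F : Tendsto F atTop atTop := by
    refine tendsto_atTop_finset_of_monotone
      (fun M N hMN f hf => mem_F.mpr fun i => (mem_F.mp hf i).trans_le hMN) fun f => ?_
    obtain ⟨N, hN⟩ := (Set.finite_range f.1).bddAbove
    exact ⟨N + 1, mem_F.mpr fun i => Nat.lt_succ_of_le (hN (Set.mem_range_self i))⟩
  obtain ⟨C, hC⟩ := exists_truncMzeta_le hk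
  refine (tendsto_sum_tsum_of_nonneg_of_le (fun f => ?_) tendsto_F
    fun N => (sum_F N).trans_le (hC N)).congr sum_F
  exact prod_nonneg fun i _ => by positivity

lemma tendsto_raiseSum_truncMzeta {k : List ℕ} (hk : IsAdmissible k) :
    Tendsto (fun N => raiseSum (truncMzeta · N) k) atTop (𝓝 (raiseSum mzeta k)) :=
  tendsto_substSum (fun _ => tendsto_truncMzeta) (by grind) (by grind [List.headI]) hk

lemma tendsto_splitSum_truncMzeta {k : List ℕ} (hk : IsAdmissible k) :
    Tendsto (fun N => splitSum (truncMzeta · N) k) atTop (𝓝 (splitSum mzeta k)) :=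
  tendsto_substSum (fun _ => tendsto_truncMzeta) (by grind) (by grind [List.headI]) hk

end HoffmanRelations

/-- Hoffman's relations: for positive integers k₁,…,kₙ with k₁ ≥ 2,
Σᵢ ζ(k₁,…,kᵢ+1,…,kₙ)
  = Σ_{i, kᵢ ≥ 2} Σ_{j=0}^{kᵢ−2} ζ(k₁,…,k_{i−1}, kᵢ−j, j+1, k_{i+1},…,kₙ). -/
theorem hoffman_relations (k : List ℕ) (hne : k ≠ [])
    (hpos : ∀ a ∈ k, 1 ≤ a) (h2 : 2 ≤ k.headI) :
    ∑ i ∈ Finset.range k.length,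
      mzeta (k.take i ++ [k.getD i 0 + 1] ++ k.drop (i + 1))
    = ∑ i ∈ Finset.range k.length,
        if 2 ≤ k.getD i 0 then
          ∑ j ∈ Finset.range (k.getD i 0 - 1),
            mzeta (k.take i ++ [k.getD i 0 - j, j + 1] ++ k.drop (i + 1))
        else 0 := by
  have raise_eq_split : raiseSum mzeta k = splitSum mzeta k := by
    have hk : IsAdmissible k := ⟨hpos, h2⟩
    refine tendsto_nhds_unique (tendsto_raiseSum_truncMzeta hk) ?_
    simpa only [raiseSum_truncMzeta hpos, add_zero] using
      (tendsto_splitSum_truncMzeta hk).add (tendsto_truncDefect hk)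
  have drop_guard (a : ℕ) (f : ℕ → ℝ) :
      (if 2 ≤ a then ∑ j ∈ Finset.range (a - 1), f j else 0) = ∑ j ∈ Finset.range (a - 1), f j :=
    ite_eq_left_iff.mpr fun ha => by simp [show a - 1 = 0 by omega]
  simpa only [drop_guard, substSum, Finset.sum_range_one] using raise_eq_split
end

section
/- For all positive integers k1, …, kn with k1 ≥ 2, the non-strict multiple zeta value expands as a sum of multiple zeta values over all ways of merging consecutive blocks of the index string: ζ̄(k1, …, kn) = Σ ζ(k_{i_0+1} + ⋯ + k_{i_1}, k_{i_1+1} + ⋯ + k_{i_2}, …, k_{i_{r−1}+1} + ⋯ + k_{i_r}), where the sum is over all 1 ≤ r ≤ n and all sequences 0 = i_0 < i_1 < ⋯ < i_r = n. -/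
open scoped BigOperators

/-- Given the index list `k = [k₁,…,kₙ]` and an increasing list
`c = [i₁,…,i_{r-1}]` of interior cut points (with `0 = i₀ < i₁ < ⋯ < i_r = n`),
returns the list of block sums
`[k₁+⋯+k_{i₁}, k_{i₁+1}+⋯+k_{i₂}, …, k_{i_{r-1}+1}+⋯+kₙ]`. -/
def blocks : List ℕ → List ℕ → List ℕ
  | k, [] => [k.sum]
  | k, i :: rest => (k.take i).sum :: blocks (k.drop i) (rest.map (· - i))
termination_by _ c => c.length
decreasing_by simp

/-!
Group the weakly decreasing tuples `m₁ ≥ ⋯ ≥ mₙ` by whether `m₁ > m₂` or `m₁ = m₂`: in the first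
case `1` is a cut point, in the second the exponents `k₁` and `k₂` merge into `k₁ + k₂`. Iterating
produces every merging exactly once. This works for sums of `∏ x(mᵢ) ^ kᵢ` over chains in any
partial order, and in `ℝ≥0∞` no convergence is needed. To return to `ℝ` one needs `ζ̄(k) < ∞`:
since `m₁ ≥ mᵢ`, the spare factor `1 / m₁` is at most `∏ mᵢ ^ (-1 / n)`, so
`ζ̄(k₁, …, kₙ) ≤ ζ(1 + 1 / n) ^ n`.
-/

open Set
open scoped ENNReal NNReal

section Blocks

theorem blocks_one_cons_map_add_one (a : ℕ) (k c : List ℕ) :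
    blocks (a :: k) (1 :: c.map (· + 1)) = a :: blocks k c := by
  simp [blocks, Function.comp_def]

theorem blocks_cons_cons_map_add_one (a b : ℕ) (k : List ℕ) {c : List ℕ} (hc : ∀ i ∈ c, 1 ≤ i) :
    blocks (a :: b :: k) (c.map (· + 1)) = blocks ((a + b) :: k) c := by
  cases c with
  | nil => simp [blocks, add_assoc]
  | cons i c =>
    obtain ⟨i, rfl⟩ := Nat.exists_eq_add_of_le' (hc i List.mem_cons_self)
    simp [blocks, Function.comp_def, add_assoc]

theorem sort_map_addRightEmbedding (S : Finset ℕ) (c : ℕ) :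
    (S.map (addRightEmbedding c)).sort (· ≤ ·) = (S.sort (· ≤ ·)).map (· + c) :=
  (Finset.map_sort (addRightEmbedding c) S (· ≤ ·) (· ≤ ·) (by simp)).symm

variable {M : Type*} [AddCommMonoid M]

theorem sum_powerset_map {α β : Type*} (e : α ↪ β) (s : Finset α) (g : Finset β → M) :
    ∑ S ∈ (s.map e).powerset, g S = ∑ S ∈ s.powerset, g (S.map e) := by
  classical
  simp only [Finset.map_eq_image, Finset.powerset_image]
  exact Finset.sum_image (Finset.image_injective e.injective).injOn

/-- The sum of `F` over all mergings of consecutive blocks of the index string `k`, one for each set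
of interior cut points. -/
def sumBlocks (F : List ℕ → M) (k : List ℕ) : M :=
  ∑ S ∈ (Finset.Icc 1 (k.length - 1)).powerset, F (blocks k (S.sort (· ≤ ·)))

theorem sumBlocks_singleton (F : List ℕ → M) (a : ℕ) : sumBlocks F [a] = F [a] := by
  simp [sumBlocks, blocks]

theorem sumBlocks_cons_cons (F : List ℕ → M) (a b : ℕ) (k : List ℕ) :
    sumBlocks F (a :: b :: k) =
      sumBlocks (fun l ↦ F (a :: l)) (b :: k) + sumBlocks F ((a + b) :: k) := by
  have cuts : Finset.Icc 1 (k.length + 1) =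
      insert 1 ((Finset.Icc 1 k.length).map (addRightEmbedding 1)) := by
    rw [Finset.map_add_right_Icc, Finset.insert_Icc_add_one_left_eq_Icc (by simp)]
  simp only [sumBlocks, List.length_cons, Nat.add_sub_cancel]
  rw [cuts, Finset.sum_powerset_insert (by simp), sum_powerset_map, sum_powerset_map, add_comm,
    ← Finset.sum_add_distrib, ← Finset.sum_add_distrib]
  refine Finset.sum_congr rfl fun S hS ↦ ?_
  have one_le : ∀ i ∈ S, 1 ≤ i := fun i hi ↦ (Finset.mem_Icc.1 (Finset.mem_powerset.1 hS hi)).1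
  have one_notMem : 1 ∉ S.map (addRightEmbedding 1) := by
    simpa using fun zero_mem ↦ absurd (one_le 0 zero_mem) (by simp)
  rw [Finset.sort_insert (r := (· ≤ ·)) (by simp) one_notMem, sort_map_addRightEmbedding,
    blocks_one_cons_map_add_one, blocks_cons_cons_map_add_one a b k (by simpa using one_le)]

end Blocks

section ChainSum

variable {α : Type*}

/-- The sum of `∏ i, x (f i) ^ kᵢ` over all tuples `f` in `s` in which every later entry lies
`below` every earlier one. Taking `below` to be `Set.Iio` gives strictly decreasing tuples, that is,
monomial quasisymmetric functions, and `Set.Iic` gives weakly decreasing ones. -/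
noncomputable def chainSum (below : α → Set α) (x : α → ℝ≥0∞) (s : Set α) (k : List ℕ) : ℝ≥0∞ :=
  ∑' f : {f : Fin k.length → α // (∀ i, f i ∈ s) ∧ ∀ i j, i < j → f j ∈ below (f i)},
    ∏ i, x (f.1 i) ^ k.get i

/-- Splitting off the first entry of a tuple that is summed over in `chainSum`. -/
def chainConsEquiv (below : α → Set α) (s : Set α) (n : ℕ) :
    {f : Fin (n + 1) → α // (∀ i, f i ∈ s) ∧ ∀ i j, i < j → f j ∈ below (f i)} ≃
      Σ m : s, {f : Fin n → α // (∀ i, f i ∈ s ∩ below m) ∧ ∀ i j, i < j → f j ∈ below (f i)} where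
  toFun f := ⟨⟨f.1 0, f.2.1 0⟩, Fin.tail f.1,
    fun i ↦ ⟨f.2.1 i.succ, f.2.2 0 i.succ i.succ_pos⟩,
    fun i j hij ↦ f.2.2 i.succ j.succ (Fin.succ_lt_succ_iff.2 hij)⟩
  invFun p := ⟨Fin.cons p.1.1 p.2.1,
    Fin.cases p.1.2 fun i ↦ (p.2.2.1 i).1,
    Fin.cases
      (Fin.cases (fun h ↦ absurd h (lt_irrefl _)) fun j _ ↦ (p.2.2.1 j).2)
      fun i ↦ Fin.cases (fun h ↦ absurd h (Fin.not_lt_zero _))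
        fun j hij ↦ p.2.2.2 i j (Fin.succ_lt_succ_iff.1 hij)⟩
  left_inv f := Subtype.ext (Fin.cons_self_tail f.1)
  right_inv _ := rfl

variable (below : α → Set α) (x : α → ℝ≥0∞) (s : Set α)

theorem chainSum_nil : chainSum below x s [] = 1 := by
  simp [chainSum]

theorem chainSum_cons (a : ℕ) (k : List ℕ) :
    chainSum below x s (a :: k) = ∑' m : s, x m ^ a * chainSum below x (s ∩ below m) k := by
  refine ((chainConsEquiv below s k.length).symm.tsum_eq _).symm.trans ?_
  rw [ENNReal.tsum_sigma']
  refine tsum_congr fun m ↦ ?_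
  rw [chainSum, ← ENNReal.tsum_mul_left]
  exact tsum_congr fun f ↦ Fin.prod_univ_succ _

theorem toReal_chainSum {below : α → Set α} {x : α → ℝ≥0∞} {s : Set α} (hx : ∀ m ∈ s, x m ≠ ∞)
    (k : List ℕ) :
    (chainSum below x s k).toReal =
      ∑' f : {f : Fin k.length → α // (∀ i, f i ∈ s) ∧ ∀ i j, i < j → f j ∈ below (f i)},
        ∏ i, (x (f.1 i)).toReal ^ k.get i := by
  rw [chainSum, ENNReal.tsum_toReal_eq fun f ↦
    ENNReal.prod_ne_top fun i _ ↦ ENNReal.pow_ne_top (hx _ (f.2.1 i))]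
  simp only [ENNReal.toReal_prod, ENNReal.toReal_pow]

theorem chainSum_Iic_inter_cons_of_isLowerSet [Preorder α] {L : Set α} (hL : IsLowerSet L)
    (b : ℕ) (k : List ℕ) :
    chainSum Iic x (s ∩ L) (b :: k) = ∑' j : ↑(s ∩ L), x j ^ b * chainSum Iic x (s ∩ Iic j) k := by
  rw [chainSum_cons]
  refine tsum_congr fun j ↦ ?_
  rw [inter_assoc, inter_eq_self_of_subset_right (hL.Iic_subset j.2.2)]

section PartialOrder

variable [PartialOrder α]

theorem inter_Iic_eq_insert_inter_Iio {s : Set α} {m : α} (hm : m ∈ s) :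
    s ∩ Iic m = insert m (s ∩ Iio m) := by
  rw [← Iio_insert, insert_inter_distrib, insert_eq_of_mem hm]

theorem tsum_inter_Iic_eq_tsum_inter_Iio_add {s : Set α} {m : α} (hm : m ∈ s) (f : α → ℝ≥0∞) :
    ∑' j : ↑(s ∩ Iic m), f j = ∑' j : ↑(s ∩ Iio m), f j + f m := by
  rw [inter_Iic_eq_insert_inter_Iio hm, insert_eq, union_comm,
    ENNReal.summable.tsum_union_disjoint (by simp) ENNReal.summable, tsum_singleton]

theorem chainSum_Iic_inter_Iic_cons {s : Set α} {m : α} (hm : m ∈ s) (b : ℕ) (k : List ℕ) :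
    chainSum Iic x (s ∩ Iic m) (b :: k) =
      chainSum Iic x (s ∩ Iio m) (b :: k) + x m ^ b * chainSum Iic x (s ∩ Iic m) k := by
  rw [chainSum_Iic_inter_cons_of_isLowerSet x s (isLowerSet_Iic m),
    chainSum_Iic_inter_cons_of_isLowerSet x s (isLowerSet_Iio m),
    tsum_inter_Iic_eq_tsum_inter_Iio_add hm fun j ↦ x j ^ b * chainSum Iic x (s ∩ Iic j) k]

theorem chainSum_Iic_cons_cons (a b : ℕ) (k : List ℕ) :
    chainSum Iic x s (a :: b :: k) =
      ∑' m : s, x m ^ a * chainSum Iic x (s ∩ Iio m) (b :: k) +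
        chainSum Iic x s ((a + b) :: k) := by
  rw [chainSum_cons, chainSum_cons, ← ENNReal.tsum_add]
  refine tsum_congr fun m ↦ ?_
  rw [chainSum_Iic_inter_Iic_cons x m.2, mul_add, pow_add, mul_assoc]

theorem chainSum_Iic_eq_sumBlocks_chainSum_Iio (a : ℕ) (k : List ℕ) :
    chainSum Iic x s (a :: k) = sumBlocks (chainSum Iio x s) (a :: k) := by
  induction k generalizing a s with
  | nil => simp only [sumBlocks_singleton, chainSum_cons, chainSum_nil]
  | cons b k ih =>
    have cut : ∑' m : s, x m ^ a * chainSum Iic x (s ∩ Iio m) (b :: k) =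
        sumBlocks (fun l ↦ chainSum Iio x s (a :: l)) (b :: k) := by
      simp only [ih, chainSum_cons _ _ _ a, sumBlocks, Finset.mul_sum]
      exact Summable.tsum_finsetSum fun _ _ ↦ ENNReal.summable
    rw [chainSum_Iic_cons_cons, cut, ih, sumBlocks_cons_cons]

end PartialOrder

end ChainSum

section Finiteness

theorem tsum_prod_fin_eq_prod_tsum {n : ℕ} {β : Fin n → Type*} (y : ∀ i, β i → ℝ≥0∞) :
    ∑' f : ∀ i, β i, ∏ i, y i (f i) = ∏ i, ∑' b, y i b := by
  induction n with
  | zero => simp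
  | succ n ih =>
    rw [← (Fin.consEquiv β).tsum_eq, ENNReal.tsum_prod', Fin.prod_univ_succ, ← ih,
      ← ENNReal.tsum_mul_right]
    refine tsum_congr fun b ↦ ?_
    rw [← ENNReal.tsum_mul_left]
    exact tsum_congr fun f ↦ Fin.prod_univ_succ _

theorem prod_pow_le_prod_rpow {n : ℕ} {y : Fin (n + 1) → ℝ≥0∞} {e : Fin (n + 1) → ℕ}
    (hy : ∀ i, y i ≤ 1) (hy₀ : ∀ i, y 0 ≤ y i) (he₀ : 2 ≤ e 0)
    (he : ∀ i : Fin n, 1 ≤ e i.succ) :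
    ∏ i, y i ^ e i ≤ ∏ i, y i ^ (1 + ((n + 1 : ℕ) : ℝ)⁻¹) := by
  have spare : ∏ i, y i ^ e i ≤ y 0 * ∏ i, y i := by
    rw [Fin.prod_univ_succ, Fin.prod_univ_succ, ← mul_assoc, ← sq]
    exact mul_le_mul' (pow_le_pow_right_of_le_one' (hy 0) he₀) <| Finset.prod_le_prod' fun i _ ↦
      (pow_le_pow_right_of_le_one' (hy i.succ) (he i)).trans_eq (pow_one _)
  have spread : y 0 ≤ ∏ i, y i ^ ((n + 1 : ℕ) : ℝ)⁻¹ :=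
    calc y 0 = ∏ _i : Fin (n + 1), y 0 ^ ((n + 1 : ℕ) : ℝ)⁻¹ := by
          rw [Finset.prod_const, Finset.card_fin, ENNReal.rpow_inv_natCast_pow n.succ_ne_zero]
      _ ≤ ∏ i, y i ^ ((n + 1 : ℕ) : ℝ)⁻¹ := by gcongr with i; exact hy₀ i
  calc ∏ i, y i ^ e i ≤ (∏ i, y i) * ∏ i, y i ^ ((n + 1 : ℕ) : ℝ)⁻¹ := by
        rw [mul_comm]
        exact spare.trans (by gcongr)
    _ = ∏ i, y i ^ (1 + ((n + 1 : ℕ) : ℝ)⁻¹) := by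
        rw [← Finset.prod_mul_distrib]
        refine Finset.prod_congr rfl fun i _ ↦ ?_
        rw [ENNReal.rpow_add_of_nonneg _ _ zero_le_one (by positivity), ENNReal.rpow_one]

theorem chainSum_Iic_cons_le_tsum_rpow_pow {α : Type*} [Preorder α] {x : α → ℝ≥0∞} {s : Set α}
    (hx : ∀ m ∈ s, x m ≤ 1) (hanti : AntitoneOn x s) {a : ℕ} {k : List ℕ} (ha : 2 ≤ a)
    (hk : ∀ b ∈ k, 1 ≤ b) :
    chainSum Iic x s (a :: k) ≤
      (∑' m : s, x m ^ (1 + ((k.length + 1 : ℕ) : ℝ)⁻¹)) ^ (k.length + 1) := by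
  calc chainSum Iic x s (a :: k)
      ≤ ∑' f : {f : Fin (k.length + 1) → α // (∀ i, f i ∈ s) ∧ ∀ i j, i < j → f j ∈ Iic (f i)},
          ∏ i, x (f.1 i) ^ (1 + ((k.length + 1 : ℕ) : ℝ)⁻¹) := by
        refine ENNReal.tsum_le_tsum fun f ↦ prod_pow_le_prod_rpow (fun i ↦ hx _ (f.2.1 i))
          (Fin.cases le_rfl fun i ↦ ?_) ha fun i ↦ hk _ (k.get_mem i)
        exact hanti (f.2.1 _) (f.2.1 _) (f.2.2 0 i.succ i.succ_pos)
    _ ≤ ∑' f : Fin (k.length + 1) → s, ∏ i, x (f i) ^ (1 + ((k.length + 1 : ℕ) : ℝ)⁻¹) :=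
        ENNReal.tsum_comp_le_tsum_of_injective
          (f := fun f i ↦ (⟨f.1 i, f.2.1 i⟩ : s))
          (fun f g h ↦ Subtype.ext (funext fun i ↦ congrArg Subtype.val (congrFun h i)))
          fun f : Fin (k.length + 1) → s ↦ ∏ i, x (f i) ^ (1 + ((k.length + 1 : ℕ) : ℝ)⁻¹)
    _ = _ := by
        rw [tsum_prod_fin_eq_prod_tsum
          fun _ (m : s) ↦ x m ^ (1 + ((k.length + 1 : ℕ) : ℝ)⁻¹), Finset.prod_const,
          Finset.card_fin]

theorem tsum_Ioi_inv_natCast_rpow_ne_top {p : ℝ} (hp : 1 < p) :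
    ∑' m : Ioi (0 : ℕ), ((m : ℕ) : ℝ≥0∞)⁻¹ ^ p ≠ ∞ := by
  have coe_term (m : Ioi (0 : ℕ)) :
      ((m : ℕ) : ℝ≥0∞)⁻¹ ^ p = ((((m : ℕ) : ℝ≥0) ^ p)⁻¹ : ℝ≥0) := by
    have hm : ((m : ℕ) : ℝ≥0) ≠ 0 := Nat.cast_ne_zero.2 (ne_of_gt m.2)
    rw [← ENNReal.coe_natCast, ← ENNReal.coe_inv hm, ← ENNReal.coe_rpow_of_nonneg _ (by linarith),
      NNReal.inv_rpow]
  simp only [coe_term]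
  exact ENNReal.tsum_coe_ne_top_iff_summable.2
    (NNReal.summable_comp_injective (NNReal.summable_rpow_inv.2 hp) Subtype.val_injective)

end Finiteness

section MultipleZeta

theorem inv_natCast_ne_top : ∀ m ∈ Ioi (0 : ℕ), (m : ℝ≥0∞)⁻¹ ≠ ∞ :=
  fun _ hm ↦ ENNReal.inv_ne_top.2 (Nat.cast_ne_zero.2 (ne_of_gt hm))

theorem mzeta_eq_toReal_chainSum (k : List ℕ) :
    mzeta k = (chainSum Iio (fun m : ℕ ↦ (m : ℝ≥0∞)⁻¹) (Ioi 0) k).toReal := by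
  rw [toReal_chainSum inv_natCast_ne_top]
  simp only [ENNReal.toReal_inv, ENNReal.toReal_natCast, inv_pow]
  rfl

theorem nmzeta_eq_toReal_chainSum (k : List ℕ) :
    nmzeta k = (chainSum Iic (fun m : ℕ ↦ (m : ℝ≥0∞)⁻¹) (Ioi 0) k).toReal := by
  rw [toReal_chainSum inv_natCast_ne_top]
  simp only [ENNReal.toReal_inv, ENNReal.toReal_natCast, inv_pow]
  have antitone_iff (f : Fin k.length → ℕ) :
      (∀ i j, i ≤ j → f j ≤ f i) ↔ ∀ i j, i < j → f j ∈ Iic (f i) :=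
    ⟨fun h i j hij ↦ h i j hij.le, fun h i j hij ↦ hij.eq_or_lt.elim (fun e ↦ e ▸ le_rfl) (h i j)⟩
  exact (Equiv.subtypeEquivRight fun f ↦ and_congr Iff.rfl (antitone_iff f)).tsum_eq
    fun f ↦ ∏ i, ((f.1 i : ℝ) ^ k.get i)⁻¹

theorem chainSum_Iic_inv_natCast_ne_top {a : ℕ} {k : List ℕ} (ha : 2 ≤ a) (hk : ∀ b ∈ k, 1 ≤ b) :
    chainSum Iic (fun m : ℕ ↦ (m : ℝ≥0∞)⁻¹) (Ioi 0) (a :: k) ≠ ∞ := by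
  have le_one : ∀ m ∈ Ioi (0 : ℕ), (m : ℝ≥0∞)⁻¹ ≤ 1 := fun m hm ↦
    ENNReal.inv_le_one.2 (Nat.one_le_cast.2 hm)
  have antitone : AntitoneOn (fun m : ℕ ↦ (m : ℝ≥0∞)⁻¹) (Ioi 0) := fun m _ n _ hmn ↦
    ENNReal.inv_le_inv.2 (Nat.cast_le.2 hmn)
  refine ne_top_of_le_ne_top (ENNReal.pow_ne_top ?_)
    (chainSum_Iic_cons_le_tsum_rpow_pow le_one antitone ha hk)
  exact tsum_Ioi_inv_natCast_rpow_ne_top (lt_add_of_pos_right 1 (by positivity))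

end MultipleZeta

/-- For positive integers k₁,…,kₙ with k₁ ≥ 2, the non-strict MZV expands as a
sum of MZVs over all ways of merging consecutive blocks:
ζ̄(k₁,…,kₙ) = Σ ζ(k_{i₀+1}+⋯+k_{i₁}, …, k_{i_{r-1}+1}+⋯+k_{i_r}),
summed over all 1 ≤ r ≤ n and all 0 = i₀ < i₁ < ⋯ < i_r = n; the interior cut
points {i₁,…,i_{r-1}} range over all subsets of {1,…,n−1}. -/
theorem nmzv_eq_sum_mzv (k : List ℕ) (hne : k ≠ [])
    (hpos : ∀ a ∈ k, 1 ≤ a) (h2 : 2 ≤ k.headI) :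
    nmzeta k =
      ∑ S ∈ (Finset.Icc 1 (k.length - 1)).powerset,
        mzeta (blocks k (S.sort (· ≤ ·))) := by
  obtain ⟨a, k, rfl⟩ := List.exists_cons_of_ne_nil hne
  have expansion := chainSum_Iic_eq_sumBlocks_chainSum_Iio (fun m : ℕ ↦ (m : ℝ≥0∞)⁻¹) (Ioi 0) a k
  have finite := chainSum_Iic_inv_natCast_ne_top (a := a) h2
    fun b hb ↦ hpos b (List.mem_cons_of_mem a hb)
  rw [expansion, sumBlocks, ENNReal.sum_ne_top] at finite
  simp only [nmzeta_eq_toReal_chainSum, mzeta_eq_toReal_chainSum]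
  rw [expansion, sumBlocks, ENNReal.toReal_sum finite]
end
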